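/- Let k be a field and B a k-linear rigid monoidal category, and let U, V, U', V' be objects of B. For each object X of B define the k-linear map i_X : Hom_B(U ⊗ X, V) ⊗_k Hom_B(U', X ⊗ V') → Hom_B(U ⊗ U', V ⊗ V') by i_X(f ⊗ g) = (f ⊗ id_{V'}) ∘ α ∘ (id_U ⊗ g), where α is the appropriate associator. Then (Hom_B(U ⊗ U', V ⊗ V'), i) is a coend of the functor (X, X') ↦ Hom_B(U ⊗ X, V) ⊗_k Hom_B(U', X' ⊗ V') over B; that is: (1) the family (i_X) is dinatural in X, i.e., for every morphism u : X → X', every f : U ⊗ X' → V and every g : U' → X ⊗ V' one has i_X(f ∘ (id_U ⊗ u) ⊗ g) = i_{X'}(f ⊗ ((u ⊗ id_{V'}) ∘ g)); and (2) for every k-vector space W and every family of k-bilinear maps φ_X : Hom_B(U ⊗ X, V) × Hom_B(U', X ⊗ V') → W that is dinatural in X, there exists a unique k-linear map Ψ : Hom_B(U ⊗ U', V ⊗ V') → W such that Ψ(i_X(f ⊗ g)) = φ_X(f, g) for all X, f, g. -/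

import Mathlib

open CategoryTheory MonoidalCategory
open scoped TensorProduct

universe w w' v u

section

variable {k : Type u} [Field k] {B : Type v} [Category.{w} B] [Preadditive B] [Linear k B]
  [MonoidalCategory B] [MonoidalPreadditive B] [MonoidalLinear k B]

/-- The `k`-bilinear map `(f, g) ↦ (f ⊗ id_{V'}) ∘ α ∘ (id_U ⊗ g)` from
`Hom(U ⊗ X, V) × Hom(U', X ⊗ V')` to `Hom(U ⊗ U', V ⊗ V')`. -/
noncomputable def coendPairing (U V U' V' X : B) :
    (U ⊗ X ⟶ V) →ₗ[k] (U' ⟶ X ⊗ V') →ₗ[k] (U ⊗ U' ⟶ V ⊗ V') :=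
  LinearMap.mk₂ k (fun f g => (U ◁ g) ≫ (α_ U X V').inv ≫ (f ▷ V'))
    (by intros; simp [MonoidalPreadditive.add_whiskerRight, Preadditive.comp_add])
    (by intros; simp [MonoidalLinear.smul_whiskerRight, Linear.comp_smul])
    (by intros; simp [MonoidalPreadditive.whiskerLeft_add, Preadditive.add_comp])
    (by intros; simp [MonoidalLinear.whiskerLeft_smul, Linear.smul_comp])

/-- The `k`-linear map
`i_X : Hom(U ⊗ X, V) ⊗[k] Hom(U', X ⊗ V') → Hom(U ⊗ U', V ⊗ V')`
with `i_X (f ⊗ g) = (f ⊗ id_{V'}) ∘ α ∘ (id_U ⊗ g)`. -/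
noncomputable def coendMap (U V U' V' X : B) :
    ((U ⊗ X ⟶ V) ⊗[k] (U' ⟶ X ⊗ V')) →ₗ[k] (U ⊗ U' ⟶ V ⊗ V') :=
  TensorProduct.lift (coendPairing U V U' V' X)

end

/-!
If `Y` is a left dual of `U`, then transposition identifies `Hom(U ⊗ X, V)` with `Hom(X, Y ⊗ V)`
naturally in `X`, so `X ↦ Hom(U ⊗ X, V)` is represented by `Y ⊗ V` with universal element the
evaluation `U ⊗ (Y ⊗ V) ⟶ V`. By co-Yoneda the coend is `Hom(U', (Y ⊗ V) ⊗ V')`, which is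
`Hom(U ⊗ U', V ⊗ V')` by transposing back. Concretely, dinaturality reduces every pair `(f, g)` to a
pair whose first entry is the evaluation, and on such pairs `i` is a linear bijection.
-/

section Composition

variable {C : Type*} [Category* C] [MonoidalCategory C] {U V U' V' X X' : C}

/-- The composite `(f ⊗ id_{V'}) ∘ α ∘ (id_U ⊗ g)` of `f` and `g` along their common factor `X`:
the value `i_X(f ⊗ g)` of the coend structure map, without any linear structure. -/
def compAlong (f : U ⊗ X ⟶ V) (g : U' ⟶ X ⊗ V') : U ⊗ U' ⟶ V ⊗ V' :=
  U ◁ g ≫ (α_ U X V').inv ≫ f ▷ V'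

theorem compAlong_dinatural (u : X ⟶ X') (f : U ⊗ X' ⟶ V) (g : U' ⟶ X ⊗ V') :
    compAlong (U ◁ u ≫ f) g = compAlong f (g ≫ u ▷ V') := by
  simp [compAlong]

/-- The evaluation `U ⊗ (Y ⊗ V) ⟶ V` of a left dual `Y` of `U`, tensored with `V`. It is the
universal element of `X ↦ Hom(U ⊗ X, V)`, and is encoded as the transpose of `𝟙 (Y ⊗ V)`. -/
def leftDualEval (Y U V : C) [ExactPairing Y U] : U ⊗ (Y ⊗ V) ⟶ V :=
  (tensorLeftHomEquiv (Y ⊗ V) Y U V).symm (𝟙 _)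

variable {Y : C} [ExactPairing Y U]

theorem whiskerLeft_tensorLeftHomEquiv_comp_leftDualEval (f : U ⊗ X ⟶ V) :
    U ◁ tensorLeftHomEquiv X Y U V f ≫ leftDualEval Y U V = f := by
  rw [leftDualEval, ← tensorLeftHomEquiv_symm_naturality, Category.comp_id,
    Equiv.symm_apply_apply]

theorem compAlong_leftDualEval (g : U' ⟶ (Y ⊗ V) ⊗ V') :
    compAlong (leftDualEval Y U V) g =
      (tensorLeftHomEquiv U' Y U (V ⊗ V')).symm (g ≫ (α_ Y V V').hom) := by
  simp [compAlong, leftDualEval, tensorLeftHomEquiv]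

end Composition

/-- Composition along `Y ⊗ V` with the evaluation of a left dual `Y` of `U`, as a linear
equivalence; its inverse is transposition. It identifies the coend computed by co-Yoneda with
`Hom(U ⊗ U', V ⊗ V')`. -/
def compAlongLeftDualEvalEquiv (k : Type*) [Semiring k] {C : Type*} [Category* C]
    [Preadditive C] [Linear k C] [MonoidalCategory C] [MonoidalPreadditive C]
    [MonoidalLinear k C] (U V U' V' Y : C) [ExactPairing Y U] :
    (U' ⟶ (Y ⊗ V) ⊗ V') ≃ₗ[k] (U ⊗ U' ⟶ V ⊗ V') where
  toFun g := compAlong (leftDualEval Y U V) g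
  map_add' g₁ g₂ := by simp [compAlong]
  map_smul' c g := by simp [compAlong]
  invFun h := tensorLeftHomEquiv U' Y U (V ⊗ V') h ≫ (α_ Y V V').inv
  left_inv g := by simp [compAlong_leftDualEval]
  right_inv h := by simp [compAlong_leftDualEval]

theorem statement7_general {k : Type*} [CommSemiring k] {C : Type*} [Category* C]
    [Preadditive C] [Linear k C] [MonoidalCategory C] [MonoidalPreadditive C]
    [MonoidalLinear k C] (U V U' V' : C) [HasLeftDual U] :
    (∀ (X X' : C) (u : X ⟶ X') (f : U ⊗ X' ⟶ V) (g : U' ⟶ X ⊗ V'),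
      compAlong (U ◁ u ≫ f) g = compAlong f (g ≫ u ▷ V')) ∧
    (∀ (W : Type*) (_ : AddCommGroup W) (_ : Module k W)
      (φ : ∀ X : C, (U ⊗ X ⟶ V) →ₗ[k] (U' ⟶ X ⊗ V') →ₗ[k] W),
      (∀ (X X' : C) (u : X ⟶ X') (f : U ⊗ X' ⟶ V) (g : U' ⟶ X ⊗ V'),
          φ X (U ◁ u ≫ f) g = φ X' f (g ≫ u ▷ V')) →
      ∃! Ψ : (U ⊗ U' ⟶ V ⊗ V') →ₗ[k] W,
        ∀ (X : C) (f : U ⊗ X ⟶ V) (g : U' ⟶ X ⊗ V'), Ψ (compAlong f g) = φ X f g) := by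
  refine ⟨fun _ _ => compAlong_dinatural, fun W _ _ φ φ_dinatural => ?_⟩
  let ev := leftDualEval (ᘁU) U V
  let e := compAlongLeftDualEvalEquiv k U V U' V' (ᘁU)
  refine ⟨φ _ ev ∘ₗ e.symm, fun X f g => ?_, fun Ψ hΨ => ?_⟩
  · let u : X ⟶ (ᘁU) ⊗ V := tensorLeftHomEquiv X (ᘁU) U V f
    have f_eq : U ◁ u ≫ ev = f := whiskerLeft_tensorLeftHomEquiv_comp_leftDualEval f
    have compAlong_eq : compAlong f g = e (g ≫ u ▷ V') := by
      rw [← f_eq]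
      exact compAlong_dinatural u ev g
    calc φ _ ev (e.symm (compAlong f g))
        = φ _ ev (g ≫ u ▷ V') := by rw [compAlong_eq, e.symm_apply_apply]
      _ = φ X f g := by rw [← φ_dinatural, f_eq]
  · ext h
    calc Ψ h = Ψ (compAlong ev (e.symm h)) := congrArg Ψ (e.apply_symm_apply h).symm
      _ = φ _ ev (e.symm h) := hΨ _ ev _

theorem coendMap_tmul {k : Type*} [Field k] {C : Type*} [Category* C] [Preadditive C] [Linear k C]
    [MonoidalCategory C] [MonoidalPreadditive C] [MonoidalLinear k C] (U V U' V' X : C)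
    (f : U ⊗ X ⟶ V) (g : U' ⟶ X ⊗ V') :
    coendMap U V U' V' X (f ⊗ₜ[k] g) = compAlong f g :=
  rfl

/-- Let `k` be a field and `B` a `k`-linear rigid monoidal category, and `U, V, U', V'` objects
of `B`.  Then `Hom(U ⊗ U', V ⊗ V')` together with the family
`i_X : Hom(U ⊗ X, V) ⊗[k] Hom(U', X ⊗ V') → Hom(U ⊗ U', V ⊗ V')`,
`i_X(f ⊗ g) = (f ⊗ id) ∘ α ∘ (id ⊗ g)`, is a coend of
`(X, X') ↦ Hom(U ⊗ X, V) ⊗[k] Hom(U', X' ⊗ V')`: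
(1) the family `i` is dinatural in `X`, and
(2) every dinatural family of `k`-bilinear maps `φ_X` into a `k`-vector space `W` factors
through it via a unique `k`-linear map `Ψ : Hom(U ⊗ U', V ⊗ V') → W`. -/
theorem statement7 {k : Type u} [Field k] {B : Type v} [Category.{w} B]
    [Preadditive B] [Linear k B] [MonoidalCategory B]
    [MonoidalPreadditive B] [MonoidalLinear k B] [RigidCategory B]
    (U V U' V' : B) :
    (∀ (X X' : B) (u : X ⟶ X') (f : U ⊗ X' ⟶ V) (g : U' ⟶ X ⊗ V'),
      coendMap (k := k) U V U' V' X (((U ◁ u) ≫ f) ⊗ₜ[k] g) =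
        coendMap (k := k) U V U' V' X' (f ⊗ₜ[k] (g ≫ (u ▷ V')))) ∧
    (∀ (W : Type w') (_ : AddCommGroup W) (_ : Module k W)
      (φ : ∀ X : B, (U ⊗ X ⟶ V) →ₗ[k] (U' ⟶ X ⊗ V') →ₗ[k] W),
      (∀ (X X' : B) (u : X ⟶ X') (f : U ⊗ X' ⟶ V) (g : U' ⟶ X ⊗ V'),
          φ X ((U ◁ u) ≫ f) g = φ X' f (g ≫ (u ▷ V'))) →
      ∃! Ψ : (U ⊗ U' ⟶ V ⊗ V') →ₗ[k] W,
        ∀ (X : B) (f : U ⊗ X ⟶ V) (g : U' ⟶ X ⊗ V'),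
          Ψ (coendMap (k := k) U V U' V' X (f ⊗ₜ[k] g)) = φ X f g) := by
  simpa only [coendMap_tmul] using statement7_general U V U' V'
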